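/- arXiv:2408.07503 — 2 statements merged into one kernel-verified Lean document; each statement's English description precedes it below -/
import Mathlib

section
/- Consider asynchronous mini-batching (Algorithm 1) run with batch size B (a positive integer) for T rounds, driven by a delay sequence d_1, …, d_T. Then for every q ∈ (0,1] and every q-quantile delay τ_q of the sequence, the number K' of epochs completed within the T rounds satisfies K' ≥ ⌊qT/(B+τ_q)⌋. In particular, if an integer K satisfies K ≤ sup over q ∈ (0,1] of ⌊qT/(B+τ_q)⌋, then at least K epochs complete within the T rounds. -/
open Finset

/-!
A round of delay at most `τ` can be rejected only if it is one of the first `τ` rounds of its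
epoch. An epoch with at most `B` accepted rounds therefore contains at most `B + τ` rounds of
delay at most `τ`. The `K'` completed epochs and the incomplete last one, which has fewer than `B`
accepted rounds, cover all `T` rounds, so fewer than `(K' + 1) * (B + τ)` rounds have delay at
most `τ`.
-/

/-- The rounds of `I` accepted by an epoch starting at round `s`. The condition `s ≤ t - d t` is
written as `s + d t ≤ t` because subtraction on `ℕ` truncates. -/
def acceptedRounds (d : ℕ → ℕ) (s : ℕ) (I : Finset ℕ) : Finset ℕ :=
  I.filter fun t => s + d t ≤ t

theorem card_filter_Ico_le_add {α : Type*} [LinearOrder α] [LocallyFiniteOrder α]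
    (p : α → Prop) [DecidablePred p] (a b c : α) :
    #{x ∈ Ico a c | p x} ≤ #{x ∈ Ico a b | p x} + #{x ∈ Ico b c | p x} :=
  calc #{x ∈ Ico a c | p x}
      ≤ #{x ∈ Ico a b ∪ Ico b c | p x} :=
        card_le_card (filter_subset_filter p Ico_subset_Ico_union_Ico)
    _ ≤ #{x ∈ Ico a b | p x} + #{x ∈ Ico b c | p x} := by
        rw [filter_union]
        exact card_union_le _ _

section Epochs

variable {d : ℕ → ℕ} {B : ℕ}

theorem card_filter_delay_le_le_card_acceptedRounds_add {s : ℕ} {I : Finset ℕ}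
    (hI : ∀ t ∈ I, s ≤ t) (τ : ℕ) :
    #{t ∈ I | d t ≤ τ} ≤ #(acceptedRounds d s I) + τ := by
  have hcover : {t ∈ I | d t ≤ τ} ⊆ acceptedRounds d s I ∪ Ico s (s + τ) := by
    intro t
    simp only [acceptedRounds, mem_union, mem_filter, mem_Ico]
    grind
  calc #{t ∈ I | d t ≤ τ}
      ≤ #(acceptedRounds d s I ∪ Ico s (s + τ)) := card_le_card hcover
    _ ≤ #(acceptedRounds d s I) + #(Ico s (s + τ)) := card_union_le _ _
    _ = #(acceptedRounds d s I) + τ := by rw [Nat.card_Ico, Nat.add_sub_cancel_left]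

theorem card_filter_delay_le_Ico_le_add (a s e τ : ℕ) :
    #{t ∈ Ico a e | d t ≤ τ} ≤
      #{t ∈ Ico a s | d t ≤ τ} + (#(acceptedRounds d s (Ico s e)) + τ) :=
  (card_filter_Ico_le_add _ a s e).trans <| Nat.add_le_add_left
    (card_filter_delay_le_le_card_acceptedRounds_add (fun _ ht => (mem_Ico.mp ht).1) τ) _

theorem card_filter_delay_le_Ico_le_mul (s : ℕ → ℕ) {n : ℕ}
    (hs : ∀ k < n, #(acceptedRounds d (s k) (Ico (s k) (s (k + 1)))) ≤ B) (τ : ℕ) :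
    #{t ∈ Ico (s 0) (s n) | d t ≤ τ} ≤ n * (B + τ) := by
  induction n with
  | zero => simp
  | succ n ih =>
    calc #{t ∈ Ico (s 0) (s (n + 1)) | d t ≤ τ}
        ≤ #{t ∈ Ico (s 0) (s n) | d t ≤ τ} +
            (#(acceptedRounds d (s n) (Ico (s n) (s (n + 1)))) + τ) :=
          card_filter_delay_le_Ico_le_add _ _ _ τ
      _ ≤ n * (B + τ) + (B + τ) := by
          gcongr
          · exact ih fun k hk => hs k (hk.trans n.lt_succ_self)
          · exact hs n n.lt_succ_self
      _ = (n + 1) * (B + τ) := (Nat.succ_mul _ _).symm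

theorem card_filter_delay_le_Ico_lt_mul (s : ℕ → ℕ) {n e : ℕ}
    (hs : ∀ k < n, #(acceptedRounds d (s k) (Ico (s k) (s (k + 1)))) ≤ B)
    (hlast : #(acceptedRounds d (s n) (Ico (s n) e)) < B) (τ : ℕ) :
    #{t ∈ Ico (s 0) e | d t ≤ τ} < (n + 1) * (B + τ) :=
  calc #{t ∈ Ico (s 0) e | d t ≤ τ}
      ≤ #{t ∈ Ico (s 0) (s n) | d t ≤ τ} + (#(acceptedRounds d (s n) (Ico (s n) e)) + τ) :=
        card_filter_delay_le_Ico_le_add _ _ _ τ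
    _ < n * (B + τ) + (B + τ) :=
        add_lt_add_of_le_of_lt (card_filter_delay_le_Ico_le_mul s hs τ)
          (Nat.add_lt_add_right hlast τ)
    _ = (n + 1) * (B + τ) := (Nat.succ_mul _ _).symm

theorem async_minibatch_epoch_count_general {T K' : ℕ} {ts es : ℕ → ℕ} (hts1 : ts 1 = 1)
    (hcomp : ∀ k, 1 ≤ k → k ≤ K' →
      #(acceptedRounds d (ts k) (Icc (ts k) (es k))) ≤ B ∧ ts (k + 1) = es k + 1)
    (hincomp : #(acceptedRounds d (ts (K' + 1)) (Icc (ts (K' + 1)) T)) < B) (τ : ℕ) :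
    #{t ∈ Icc 1 T | d t ≤ τ} / (B + τ) ≤ K' := by
  have hepoch : ∀ k < K',
      #(acceptedRounds d (ts (k + 1)) (Ico (ts (k + 1)) (ts (k + 1 + 1)))) ≤ B := by
    intro k hk
    obtain ⟨hcard, hnext⟩ := hcomp (k + 1) k.succ_pos hk
    rwa [hnext, Ico_add_one_right_eq_Icc]
  rw [← Ico_add_one_right_eq_Icc] at hincomp ⊢
  have hcount : #{t ∈ Ico (ts 1) (T + 1) | d t ≤ τ} < (K' + 1) * (B + τ) :=
    card_filter_delay_le_Ico_lt_mul (fun k => ts (k + 1)) hepoch hincomp τ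
  rw [hts1, mul_comm] at hcount
  exact Nat.le_of_lt_succ (Nat.div_lt_of_lt_mul hcount)

end Epochs

/-- for Algorithm 1 (asynchronous mini-batching with batch size B)
run for T rounds with delay sequence d, the number K' of completed epochs
satisfies K' ≥ ⌊qT/(B+τ)⌋ for every q ∈ (0,1] and every q-quantile delay τ.

The epoch structure is described by the sequences `ts` (epoch start rounds) and
`es` (epoch completion rounds): epoch k covers rounds [ts k, es k]; a round t of
epoch k is accepted iff ts k ≤ t - d t (equivalently ts k + d t ≤ t); epoch k is
completed at its B-th accepted round es k (so es k is accepted and there are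
exactly B accepted rounds in [ts k, es k]); and epoch k+1 starts at es k + 1.
Exactly K' epochs complete within the T rounds: epochs 1..K' complete with
es K' ≤ T, while epoch K'+1 sees fewer than B accepted rounds up to round T. -/
theorem async_minibatch_epoch_count
    (T B : ℕ) (hT : 1 ≤ T) (hB : 1 ≤ B)
    (d : ℕ → ℕ) (hd : ∀ t, 1 ≤ t → t ≤ T → d t < t)
    (ts es : ℕ → ℕ) (K' : ℕ)
    (hts1 : ts 1 = 1)
    (hcomp : ∀ k, 1 ≤ k → k ≤ K' →
      ts k + d (es k) ≤ es k ∧ es k ≤ T ∧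
      ((Finset.Icc (ts k) (es k)).filter (fun t => ts k + d t ≤ t)).card = B ∧
      ts (k + 1) = es k + 1)
    (hincomp :
      ((Finset.Icc (ts (K' + 1)) T).filter (fun t => ts (K' + 1) + d t ≤ t)).card < B)
    (q : ℝ) (hq0 : 0 < q) (hq1 : q ≤ 1)
    (τ : ℕ)
    (hτ : (⌈q * T⌉₊ : ℕ) ≤ ((Finset.Icc 1 T).filter (fun t => d t ≤ τ)).card) :
    ⌊q * T / ((B : ℝ) + τ)⌋₊ ≤ K' := by
  rw [← Nat.cast_add, Nat.floor_div_natCast]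
  calc ⌊q * T⌋₊ / (B + τ)
      ≤ #{t ∈ Icc 1 T | d t ≤ τ} / (B + τ) :=
        Nat.div_le_div_right ((Nat.floor_le_ceil _).trans hτ)
    _ ≤ K' := async_minibatch_epoch_count_general hts1
        (fun k h1 hk => (hcomp k h1 hk).2.2.imp_left Eq.le) hincomp τ
end

section
/- Let T ≥ 1 be an integer, let w⋆ ≤ w_1 be real numbers, let η > 0 and ε > 0 satisfy 2εηT ≤ 1, and let d_1, …, d_T be integers with 0 ≤ d_t ≤ t−1 for every t. Define the iterates w_{t+1} = w_t − η·ε·(w_{t−d_t} − w⋆) for t = 1, …, T. Then for every t ∈ {1, …, T+1}: (w_1 − w⋆)/2 ≤ w_t − w⋆ ≤ w_1 − w⋆. -/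
/-!
The gap `x n` to the minimizer satisfies `x (n + 1) = x n - α • x j` with some `j ≤ n`. As long as
all earlier gaps lie in `[0, x 0]`, each step shrinks the gap by an amount in `[0, α • x 0]`, so the
gap never exceeds `x 0` and after `n` steps it is at least `(1 - α * n) • x 0`. A total drift of at
most `1` keeps this lower bound nonnegative, which closes the induction.
-/

section OrderedModule

variable {R E : Type*} [Ring R] [PartialOrder R]
  [AddCommGroup E] [PartialOrder E] [IsOrderedAddMonoid E] [Module R E]

theorem sub_smul_mem_Icc [PosSMulMono R E] {α c : R} {a y z : E} (hα : 0 ≤ α)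
    (hy : y ∈ Set.Icc (c • a) a) (hz : z ∈ Set.Icc 0 a) :
    y - α • z ∈ Set.Icc ((c - α) • a) a := by
  constructor
  · calc
      (c - α) • a = c • a - α • a := sub_smul c α a
      _ ≤ y - α • z := sub_le_sub hy.1 (smul_le_smul_of_nonneg_left hz.2 hα)
  · exact (sub_le_self y (smul_nonneg hα hz.1)).trans hy.2

theorem mem_Icc_of_delayed_recurrence [IsOrderedRing R] [PosSMulMono R E]
    {α : R} {x : ℕ → E} {N : ℕ} (hα : 0 ≤ α) (hx : 0 ≤ x 0) (hN : α * N ≤ 1)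
    (hrec : ∀ n < N, ∃ j ≤ n, x (n + 1) = x n - α • x j) {n : ℕ} (hn : n ≤ N) :
    x n ∈ Set.Icc ((1 - α * n) • x 0) (x 0) := by
  induction n using Nat.strong_induction_on with
  | _ n ih =>
    cases n with
    | zero => simp
    | succ n =>
      obtain ⟨j, hj, hstep⟩ := hrec n hn
      have current_mem := ih n n.lt_succ_self (by omega)
      have delayed_mem := ih j (by omega) (by omega)
      have drift_le : α * j ≤ 1 :=
        (mul_le_mul_of_nonneg_left (Nat.mono_cast (by omega)) hα).trans hN
      have delayed_nonneg : 0 ≤ x j :=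
        (smul_nonneg (sub_nonneg.2 drift_le) hx).trans delayed_mem.1
      have coeff_eq : 1 - α * (n + 1 : ℕ) = 1 - α * n - α := by
        rw [Nat.cast_succ, mul_add_one, sub_add_eq_sub_sub]
      rw [hstep, coeff_eq]
      exact sub_smul_mem_Icc hα current_mem ⟨delayed_nonneg, delayed_mem.2⟩

theorem delayed_gd_iterates_stay_in_interval_general [IsOrderedRing R] [IsOrderedModule R E]
    {T : ℕ} {wstar : E} {η ε θ : R} (hη : 0 ≤ η) (hε : 0 ≤ ε)
    (hdrift : η * ε * T ≤ θ) (hθ : θ ≤ 1)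
    {d : ℕ → ℕ} (hd : ∀ t, 1 ≤ t → t ≤ T → d t ≤ t - 1)
    {w : ℕ → E} (hle : wstar ≤ w 1)
    (hrec : ∀ t, 1 ≤ t → t ≤ T → w (t + 1) = w t - (η * ε) • (w (t - d t) - wstar))
    {t : ℕ} (ht : 1 ≤ t) (htT : t ≤ T + 1) :
    (1 - θ) • (w 1 - wstar) ≤ w t - wstar ∧ w t - wstar ≤ w 1 - wstar := by
  obtain ⟨n, rfl⟩ := Nat.exists_eq_add_of_le' ht
  have hα : 0 ≤ η * ε := mul_nonneg hη hε
  have hgap : 0 ≤ w 1 - wstar := sub_nonneg.2 hle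
  have hn : n ≤ T := Nat.le_of_succ_le_succ htT
  have gap_rec : ∀ m < T, ∃ j ≤ m,
      w (m + 1 + 1) - wstar = w (m + 1) - wstar - (η * ε) • (w (j + 1) - wstar) := by
    intro m hm
    have hdm := hd (m + 1) (by omega) hm
    refine ⟨m - d (m + 1), Nat.sub_le _ _, ?_⟩
    rw [hrec (m + 1) (by omega) hm, show m + 1 - d (m + 1) = m - d (m + 1) + 1 by omega,
      sub_right_comm]
  have gap_mem := mem_Icc_of_delayed_recurrence (x := fun m ↦ w (m + 1) - wstar)
    hα hgap (hdrift.trans hθ) gap_rec hn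
  have drift_le : η * ε * n ≤ θ :=
    (mul_le_mul_of_nonneg_left (Nat.mono_cast hn) hα).trans hdrift
  exact ⟨(smul_le_smul_of_nonneg_right (sub_le_sub_left drift_le 1) hgap).trans gap_mem.1,
    gap_mem.2⟩

end OrderedModule

/-- the key inductive claim in the small-stepsize lower bound for
delayed gradient descent on the quadratic f(w) = (ε/2)(w − w⋆)²: if
2εηT ≤ 1, then all iterates of w_{t+1} = w_t − η·ε·(w_{t−d_t} − w⋆) (for
t = 1, …, T, started at w_1 ≥ w⋆) satisfy
(w_1 − w⋆)/2 ≤ w_t − w⋆ ≤ w_1 − w⋆ for every t ∈ {1, …, T+1}. -/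
theorem delayed_gd_iterates_stay_in_interval
    (T : ℕ) (hT : 1 ≤ T)
    (wstar w1 : ℝ) (hle : wstar ≤ w1)
    (η ε : ℝ) (hη : 0 < η) (hε : 0 < ε)
    (hdrift : 2 * ε * η * T ≤ 1)
    (d : ℕ → ℕ) (hd : ∀ t, 1 ≤ t → t ≤ T → d t ≤ t - 1)
    (w : ℕ → ℝ) (hw1 : w 1 = w1)
    (hrec : ∀ t, 1 ≤ t → t ≤ T → w (t + 1) = w t - η * ε * (w (t - d t) - wstar)) :
    ∀ t, 1 ≤ t → t ≤ T + 1 →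
      (w1 - wstar) / 2 ≤ w t - wstar ∧ w t - wstar ≤ w1 - wstar := by
  subst hw1
  have half_gap : (w 1 - wstar) / 2 = (1 - 1 / 2 : ℝ) * (w 1 - wstar) := by ring
  exact fun t ht htT ↦ half_gap ▸ delayed_gd_iterates_stay_in_interval_general
    hη.le hε.le (by linarith) one_half_lt_one.le hd hle hrec ht htT
end
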